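/- Let y, υ : [0,∞) → ℝ be càdlàg functions with y_0 ≤ υ_0. Define k_t = −sup_{s≤t} (y_s − υ_s)⁺ (where a⁺ = max(a, 0)) and x_t = y_t + k_t. Then k is nonincreasing and càdlàg with k_0 = 0, x_t ≤ υ_t for all t ≥ 0, and ∫_{[0,t]} (υ_s − x_s) d(−k)_s = 0 for every t ≥ 0, where d(−k) denotes the Lebesgue–Stieltjes measure of the nondecreasing right-continuous function −k; that is, (x, k) solves the deterministic Skorokhod problem with the single upper barrier υ. -/

import Mathlib

open MeasureTheory Filter Set Function Topology

noncomputable section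

/-- A function with values in a topological space is càdlàg on `[0,∞)`:
right-continuous at every `t ≥ 0` and admitting a left limit at every `t > 0`. -/
def CadlagOn {E : Type*} [TopologicalSpace E] (f : ℝ → E) : Prop :=
  (∀ t : ℝ, 0 ≤ t → ContinuousWithinAt f (Set.Ici t) t) ∧
  ∀ t : ℝ, 0 < t → ∃ L : E, Filter.Tendsto f (nhdsWithin t (Set.Iio t)) (nhds L)

/-- Condition (H) on `h : [0,∞) × ℝ → ℝ` with constants `Mh, Lh, ch, Ch`. -/
structure CondH (h : ℝ → ℝ → ℝ) (Mh Lh ch Ch : ℝ) : Prop where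
  meas : Measurable (Function.uncurry h)
  Mh_pos : 0 < Mh
  Lh_pos : 0 < Lh
  ch_pos : 0 < ch
  Ch_pos : 0 < Ch
  growth : ∀ t x : ℝ, 0 ≤ t → |h t x| ≤ Mh * (1 + |x|)
  strict_mono : ∀ t : ℝ, 0 ≤ t → StrictMono (h t)
  lip_time : ∀ s t x : ℝ, 0 ≤ s → 0 ≤ t → |h t x - h s x| ≤ Lh * |t - s|
  lip_lower : ∀ t x y : ℝ, 0 ≤ t → ch * |x - y| ≤ |h t x - h t y|
  lip_upper : ∀ t x y : ℝ, 0 ≤ t → |h t x - h t y| ≤ Ch * |x - y|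

/-- A process with càdlàg paths, integrable values, and values uniformly integrable
on every compact time interval. -/
structure NiceProcess {Ω : Type*} [MeasurableSpace Ω] (μ : Measure Ω) (Y : ℝ → Ω → ℝ) : Prop where
  cadlag : ∀ ω, CadlagOn fun t => Y t ω
  integrable : ∀ t : ℝ, 0 ≤ t → Integrable (Y t) μ
  unifInt : ∀ q : ℝ, 0 ≤ q → UniformIntegrable (fun t : Set.Icc (0:ℝ) q => Y t.1) 1 μ

/-- Solution of the Skorokhod problem with mean minimality condition and two constraints
associated with `(h, Y, l, u)`. -/
def MeanSP {Ω : Type*} [MeasurableSpace Ω] (μ : Measure Ω) (h : ℝ → ℝ → ℝ)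
    (Y : ℝ → Ω → ℝ) (l u : ℝ → ℝ) (X : ℝ → Ω → ℝ) (k : ℝ → ℝ) : Prop :=
  (∀ ω, CadlagOn fun t => X t ω) ∧ CadlagOn k ∧ k 0 = 0 ∧
  (∀ t : ℝ, 0 ≤ t → ∀ ω, X t ω = Y t ω + k t) ∧
  (∀ t : ℝ, 0 ≤ t → (∫ ω, h t (X t ω) ∂μ) ∈ Set.Icc (l t) (u t)) ∧
  (∀ t q : ℝ, 0 ≤ t → t ≤ q →
    ((∀ s : ℝ, t < s → s ≤ q → (∫ ω, h s (X s ω) ∂μ) < u s) → 0 ≤ k q - k t) ∧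
    ((∀ s : ℝ, t < s → s ≤ q → l s < ∫ ω, h s (X s ω) ∂μ) → k q - k t ≤ 0)) ∧
  ∀ t : ℝ, 0 < t →
    ((∫ ω, h t (X t ω) ∂μ) < u t → 0 ≤ k t - Function.leftLim k t) ∧
    (l t < ∫ ω, h t (X t ω) ∂μ → k t - Function.leftLim k t ≤ 0)

/-- Solution of the deterministic Skorokhod problem with two time-dependent barriers. -/
def DetSP (y lb ub x k : ℝ → ℝ) : Prop :=
  CadlagOn x ∧ CadlagOn k ∧ k 0 = 0 ∧
  (∀ t : ℝ, 0 ≤ t → x t = y t + k t ∧ x t ∈ Set.Icc (lb t) (ub t)) ∧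
  (∀ t q : ℝ, 0 ≤ t → t ≤ q →
    ((∀ s : ℝ, t < s → s ≤ q → x s < ub s) → 0 ≤ k q - k t) ∧
    ((∀ s : ℝ, t < s → s ≤ q → lb s < x s) → k q - k t ≤ 0)) ∧
  ∀ t : ℝ, 0 < t →
    (x t < ub t → 0 ≤ k t - Function.leftLim k t) ∧
    (lb t < x t → k t - Function.leftLim k t ≤ 0)

/-- Solution of the Skorokhod problem with mean minimality condition and a single
lower barrier `l`.  The minimality condition `∫ (E[h(s,X_s)] - l_s) dk_s = 0` is expressed
through any measure `ν` that agrees with the Lebesgue–Stieltjes measure of `k` on `[0,∞)`. -/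
def MeanSPLower {Ω : Type*} [MeasurableSpace Ω] (μ : Measure Ω) (h : ℝ → ℝ → ℝ)
    (Y : ℝ → Ω → ℝ) (l : ℝ → ℝ) (X : ℝ → Ω → ℝ) (k : ℝ → ℝ) : Prop :=
  (∀ ω, CadlagOn fun t => X t ω) ∧ CadlagOn k ∧ k 0 = 0 ∧
  (∀ t : ℝ, 0 ≤ t → ∀ ω, X t ω = Y t ω + k t) ∧
  (∀ t : ℝ, 0 ≤ t → l t ≤ ∫ ω, h t (X t ω) ∂μ) ∧
  MonotoneOn k (Set.Ici 0) ∧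
  ∀ ν : Measure ℝ,
    (∀ a b : ℝ, 0 ≤ a → a ≤ b → ν (Set.Ioc a b) = ENNReal.ofReal (k b - k a)) →
    ν {0} = 0 →
    ∀ t : ℝ, 0 ≤ t → (∫ s in Set.Icc 0 t, ((∫ ω, h s (X s ω) ∂μ) - l s) ∂ν) = 0

/-- Solution of the Skorokhod problem with mean minimality condition and a single
upper barrier `u`.  The minimality condition `∫ (u_s - E[h(s,X_s)]) d(-k)_s = 0` is expressed
through any measure `ν` that agrees with the Lebesgue–Stieltjes measure of `-k` on `[0,∞)`. -/
def MeanSPUpper {Ω : Type*} [MeasurableSpace Ω] (μ : Measure Ω) (h : ℝ → ℝ → ℝ)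
    (Y : ℝ → Ω → ℝ) (u : ℝ → ℝ) (X : ℝ → Ω → ℝ) (k : ℝ → ℝ) : Prop :=
  (∀ ω, CadlagOn fun t => X t ω) ∧ CadlagOn k ∧ k 0 = 0 ∧
  (∀ t : ℝ, 0 ≤ t → ∀ ω, X t ω = Y t ω + k t) ∧
  (∀ t : ℝ, 0 ≤ t → (∫ ω, h t (X t ω) ∂μ) ≤ u t) ∧
  AntitoneOn k (Set.Ici 0) ∧
  ∀ ν : Measure ℝ,
    (∀ a b : ℝ, 0 ≤ a → a ≤ b → ν (Set.Ioc a b) = ENNReal.ofReal (k a - k b)) →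
    ν {0} = 0 →
    ∀ t : ℝ, 0 ≤ t → (∫ s in Set.Icc 0 t, (u s - ∫ ω, h s (X s ω) ∂μ) ∂ν) = 0

/-- `OscN x η q` is the number of `η`-oscillations of `x` on `[0,q]`: the largest `m`
for which there are `0 ≤ t₁ ≤ t₂ ≤ ⋯ ≤ t_{2m} ≤ q` with `|x(t_{2i}) - x(t_{2i-1})| > η`. -/
def OscN (x : ℝ → ℝ) (η q : ℝ) : ℕ :=
  sSup {m : ℕ | ∃ a b : Fin m → ℝ,
    (∀ i, 0 ≤ a i ∧ a i ≤ b i ∧ b i ≤ q) ∧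
    (∀ i j, i < j → b i ≤ a j) ∧
    ∀ i, η < |x (b i) - x (a i)|}

/-- The left limit at `t` of a càdlàg function on `[0,∞)`, with the convention
`x(0-) = x(0)`. -/
def leftLimAt {E : Type*} [TopologicalSpace E] (x : ℝ → E) (t : ℝ) : E :=
  if t = 0 then x 0 else Function.leftLim x t

/-- Convergence `xₙ → x` in the Skorokhod `J₁` topology on `D([0,∞), E)`, expressed via
the sequence characterization used in the paper. -/
def DConvOn {E : Type*} [TopologicalSpace E] (xs : ℕ → ℝ → E) (x : ℝ → E) : Prop :=
  ∀ t : ℝ, 0 ≤ t → ∃ tn : ℕ → ℝ,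
    (∀ n, 0 ≤ tn n) ∧ Filter.Tendsto tn Filter.atTop (nhds t) ∧
    ∀ t' t'' : ℕ → ℝ, (∀ n, 0 ≤ t' n) → (∀ n, 0 ≤ t'' n) →
      Filter.Tendsto t' Filter.atTop (nhds t) → Filter.Tendsto t'' Filter.atTop (nhds t) →
      (∀ n, t' n < tn n ∧ tn n ≤ t'' n) →
      Filter.Tendsto (fun n => xs n (t' n)) Filter.atTop (nhds (leftLimAt x t)) ∧
      Filter.Tendsto (fun n => xs n (t'' n)) Filter.atTop (nhds (x t))

/-- A càdlàg function is bounded above on compact intervals. -/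
theorem cadlag_bdd (f : ℝ → ℝ) (hf : CadlagOn f) (t : ℝ) : BddAbove (f '' Set.Icc 0 t) := by
  refine (isCompact_Icc (a := (0:ℝ)) (b := t)).induction_on (p := fun s => BddAbove (f '' s))
    ?_ ?_ ?_ ?_
  · simp
  · intro s u hsu hu
    exact hu.mono (Set.image_mono hsu)
  · intro s u hs hu
    rw [Set.image_union]
    exact hs.union hu
  · intro s hs
    have hr : ∀ᶠ r in 𝓝[Set.Ici s] s, f r < f s + 1 :=
      (hf.1 s hs.1).eventually (gt_mem_nhds (by linarith))
    rcases hs.1.eq_or_lt with h | h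
    · subst h
      refine ⟨{r | f r < f 0 + 1}, ?_, ⟨f 0 + 1, ?_⟩⟩
      · exact nhdsWithin_mono _ Set.Icc_subset_Ici_self hr
      · rintro _ ⟨r, hr, rfl⟩
        exact le_of_lt hr
    · obtain ⟨L, hL⟩ := hf.2 s h
      have hl : ∀ᶠ r in 𝓝[Set.Iio s] s, f r < L + 1 :=
        hL.eventually (gt_mem_nhds (by linarith))
      refine ⟨{r | f r < max (f s + 1) (L + 1)}, ?_, ⟨max (f s + 1) (L + 1), ?_⟩⟩
      · apply mem_nhdsWithin_of_mem_nhds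
        have : 𝓝 s = 𝓝[Set.Iio s] s ⊔ 𝓝[Set.Ici s] s := by
          rw [← nhdsWithin_union, Set.Iio_union_Ici, nhdsWithin_univ]
        rw [this]
        refine Filter.mem_sup.2 ⟨?_, ?_⟩
        · filter_upwards [hl] with r hr
          exact lt_max_of_lt_right hr
        · filter_upwards [hr] with r hr
          exact lt_max_of_lt_left hr
      · rintro _ ⟨r, hr, rfl⟩
        exact le_of_lt hr

/-- A set all of whose points `s` carry no mass and have a null right neighbourhood is null. -/
theorem null_of_right_null (ν : Measure ℝ) (S : Set ℝ) (h1 : ∀ s ∈ S, ν {s} = 0)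
    (h2 : ∀ s ∈ S, ∃ r, s < r ∧ ν (Set.Ioo s r) = 0) : ν S = 0 := by
  choose! e he hν using h2
  set T : Set ℝ := ⋃ s ∈ S, Set.Ioo s (e s) with hT
  have hT0 : ν T = 0 := by
    refine measure_null_of_locally_null T fun x hx => ?_
    simp only [hT, Set.mem_iUnion] at hx
    obtain ⟨s, hs, hx⟩ := hx
    exact ⟨_, mem_nhdsWithin_of_mem_nhds (isOpen_Ioo.mem_nhds hx), hν s hs⟩
  have hc : (S \ T).Countable := by
    refine (countable_setOfPred_isolated_right_within (s := S \ T)).mono ?_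
    intro x hx
    refine ⟨hx, ?_⟩
    rw [← Filter.empty_mem_iff_bot, mem_nhdsWithin]
    refine ⟨Set.Iio (e x), isOpen_Iio, he x hx.1, ?_⟩
    rintro z ⟨hz, hz1, hz2⟩
    exact hz1.2 (Set.mem_biUnion hx.1 ⟨hz2, hz⟩)
  have hST : ν (S \ T) = 0 := by
    rw [← Set.biUnion_of_singleton (S \ T)]
    exact (measure_biUnion_null_iff hc).2 fun s hs => h1 s hs.1
  refine measure_mono_null (t := (S \ T) ∪ T) ?_ (measure_union_null hST hT0)
  rw [Set.sdiff_union_self]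
  exact Set.subset_union_left

theorem stmt_18 (y ub : ℝ → ℝ) (hy : CadlagOn y) (hub : CadlagOn ub)
    (h0 : y 0 ≤ ub 0) (k x : ℝ → ℝ)
    (hk : ∀ t : ℝ, k t = -sSup ((fun s => max (y s - ub s) 0) '' Set.Icc 0 t))
    (hx : ∀ t : ℝ, x t = y t + k t) :
    AntitoneOn k (Set.Ici 0) ∧ CadlagOn k ∧ k 0 = 0 ∧
    (∀ t : ℝ, 0 ≤ t → x t ≤ ub t) ∧
    ∀ ν : Measure ℝ,
      (∀ a b : ℝ, 0 ≤ a → a ≤ b → ν (Set.Ioc a b) = ENNReal.ofReal (k a - k b)) →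
      ν {0} = 0 →
      ∀ t : ℝ, 0 ≤ t → (∫ s in Set.Icc 0 t, (ub s - x s) ∂ν) = 0 := by
  set g : ℝ → ℝ := fun s => max (y s - ub s) 0 with hg
  have hgr : ∀ t : ℝ, 0 ≤ t → ContinuousWithinAt g (Set.Ici t) t := fun t ht =>
    ((hy.1 t ht).sub (hub.1 t ht)).max continuousWithinAt_const
  have hgc : CadlagOn g := by
    refine ⟨hgr, fun t ht => ?_⟩
    obtain ⟨L, hL⟩ := hy.2 t ht
    obtain ⟨M, hM⟩ := hub.2 t ht
    exact ⟨max (L - M) 0, (hL.sub hM).max tendsto_const_nhds⟩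
  have hb := cadlag_bdd g hgc
  have hg0 : ∀ s, 0 ≤ g s := fun s => le_max_right _ _
  have hgz : ∀ s, y s - ub s ≤ g s := fun s => le_max_left _ _
  -- `g ≤ -k`
  have hgk : ∀ s t, 0 ≤ s → s ≤ t → g s ≤ -k t := fun s t hs hst => by
    rw [hk t, neg_neg]
    exact le_csSup (hb t) ⟨s, ⟨hs, hst⟩, rfl⟩
  have hkle : ∀ t c, 0 ≤ t → (∀ s, 0 ≤ s → s ≤ t → g s ≤ c) → -k t ≤ c := by
    intro t c ht hc
    rw [hk t, neg_neg]
    refine csSup_le ⟨g 0, 0, ⟨le_rfl, ht⟩, rfl⟩ ?_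
    rintro _ ⟨s, hs, rfl⟩
    exact hc s hs.1 hs.2
  have hanti : AntitoneOn k (Set.Ici 0) := by
    intro s hs t ht hst
    have := hkle s (-k t) hs fun r hr hrs => hgk r t hr (hrs.trans hst)
    linarith
  have hext : ∀ t r c, 0 ≤ t → t ≤ r → -k t ≤ c → (∀ s, t ≤ s → s ≤ r → g s ≤ c) → -k r ≤ c := by
    intro t r c ht htr hc h
    refine hkle r c (ht.trans htr) fun s hs hsr => ?_
    rcases le_total s t with hst | hst
    · exact (hgk s t hs hst).trans hc
    · exact h s hst hsr
  -- eventual bounds to the right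
  have hright : ∀ t c, 0 ≤ t → g t < c → ∃ r, t < r ∧ ∀ s, t ≤ s → s < r → g s < c := by
    intro t c ht hc
    have := (hgr t ht).eventually (gt_mem_nhds hc)
    obtain ⟨r, hr, hr'⟩ := (mem_nhdsGE_iff_exists_Ico_subset).1 this
    exact ⟨r, hr, fun s h1 h2 => hr' ⟨h1, h2⟩⟩
  refine ⟨hanti, ⟨?_, ?_⟩, ?_, ?_, ?_⟩
  · intro t ht
    rw [Metric.continuousWithinAt_iff]
    intro ε hε
    obtain ⟨r, hr, hr'⟩ := hright t (-k t + ε / 2) ht (by have := hgk t t ht le_rfl; linarith)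
    refine ⟨r - t, by linarith, fun {s} hs hd => ?_⟩
    have hs' : t ≤ s := hs
    rw [Real.dist_eq, abs_of_nonneg (by linarith)] at hd
    have h1 := hext t s (-k t + ε / 2) ht hs' (by linarith)
      fun u hu hus => (hr' u hu (by linarith)).le
    have h2 := hanti (Set.mem_Ici.2 ht) (Set.mem_Ici.2 (ht.trans hs')) hs'
    rw [Real.dist_eq, abs_lt]
    constructor <;> linarith
  · intro t ht
    have hm : MonotoneOn (fun s => -k s) (Set.Ioo 0 t) := fun a ha b hb hab =>
      neg_le_neg (hanti (Set.mem_Ici.2 ha.1.le) (Set.mem_Ici.2 hb.1.le) hab)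
    have := hm.tendsto_nhdsWithin_Ioo_left (by simpa using ht) ⟨-k t, by
      rintro _ ⟨s, hs, rfl⟩
      exact neg_le_neg (hanti (Set.mem_Ici.2 hs.1.le) (Set.mem_Ici.2 ht.le) hs.2.le)⟩
    exact ⟨_, by simpa using this.neg⟩
  · have h1 := hgk 0 0 le_rfl le_rfl
    have h2 := hkle 0 0 le_rfl fun s hs hs' => by
      obtain rfl : s = 0 := le_antisymm hs' hs
      exact max_le (by linarith) le_rfl
    linarith [hg0 0]
  · intro t ht
    have := hgk t t ht le_rfl
    have := hgz t
    rw [hx]; linarith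
  · intro ν hν hν0 t ht
    refine integral_eq_zero_of_ae ?_
    rw [Filter.EventuallyEq, ae_restrict_iff' measurableSet_Icc]
    refine measure_mono_null (t := {s | 0 ≤ s ∧ y s - ub s < -k s}) ?_ ?_
    · intro s hs
      simp only [Set.mem_compl_iff, Set.mem_ofPred_eq, Classical.not_imp, Pi.zero_apply] at hs
      refine ⟨hs.1.1, lt_of_le_of_ne ((hgz s).trans (hgk s s hs.1.1 le_rfl)) fun h => hs.2 ?_⟩
      rw [hx]; linarith
    · apply null_of_right_null
      · rintro s ⟨hs, hlt⟩
        rcases hs.eq_or_lt with h | hs0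
        · rw [← h]; exact hν0
        by_cases hz : -k s = 0
        · refine measure_mono_null (t := Set.Ioc 0 s) (by simpa using hs0) ?_
          rw [hν 0 s le_rfl hs, ENNReal.ofReal_eq_zero]
          have := (hg0 0).trans (hgk 0 0 le_rfl le_rfl)
          linarith
        · have hpos : 0 < -k s :=
            lt_of_le_of_ne ((hg0 s).trans (hgk s s hs le_rfl)) (Ne.symm hz)
          have hgs : g s < -k s := max_lt hlt hpos
          refine le_antisymm (ENNReal.le_of_forall_pos_le_add fun ε hε _ => ?_) zero_le
          have hε' : (0:ℝ) < ε := hε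
          have : ∃ r, 0 ≤ r ∧ r ≤ s ∧ max (-k s - ε) (g s) < g r := by
            by_contra! hcon
            have := hkle s _ hs hcon
            have h3 : max (-k s - ε) (g s) < -k s := max_lt (by linarith) hgs
            linarith
          obtain ⟨r, hr0, hrs, hr⟩ := this
          have hne : r ≠ s := by
            rintro rfl
            exact absurd hr (not_lt.2 (le_max_right _ _))
          have hrs' : r < s := lt_of_le_of_ne hrs hne
          calc ν {s} ≤ ν (Set.Ioc r s) := measure_mono (by simpa using hrs')
            _ = ENNReal.ofReal (k r - k s) := hν r s hr0 hrs
            _ ≤ ENNReal.ofReal ε := by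
              apply ENNReal.ofReal_le_ofReal
              have h4 := (le_max_left (-k s - ε) (g s)).trans_lt hr
              have := hgk r r hr0 le_rfl
              linarith
            _ = 0 + ε := by simp
      · rintro s ⟨hs, hlt⟩
        have hc : ∃ r, s < r ∧ ∀ u, s ≤ u → u < r → g u ≤ -k s := by
          have hz : ContinuousWithinAt (fun s => y s - ub s) (Set.Ici s) s :=
            (hy.1 s hs).sub (hub.1 s hs)
          have := hz.eventually (gt_mem_nhds hlt)
          obtain ⟨r, hr, hr'⟩ := (mem_nhdsGE_iff_exists_Ico_subset).1 this
          exact ⟨r, hr, fun u h1 h2 => max_le (le_of_lt (hr' ⟨h1, h2⟩))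
            ((hg0 s).trans (hgk s s hs le_rfl))⟩
        obtain ⟨r, hr, hru⟩ := hc
        refine ⟨(s + r) / 2, by linarith, measure_mono_null Set.Ioo_subset_Ioc_self ?_⟩
        rw [hν s _ hs (by linarith), ENNReal.ofReal_eq_zero]
        have := hext s ((s + r) / 2) (-k s) hs (by linarith) le_rfl
          fun u h1 h2 => hru u h1 (by linarith)
        linarith
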